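/- arXiv:2102.13417 — 6 statements merged into one kernel-verified Lean document; each statement's English description precedes it below -/
import Mathlib

section
/- Let 0 < r ≤ 1 and let m(α,β) := (cos α cos β, cos α sin β, sin α) ∈ ℝ³. Define the 2×2 complex matrix family ρ(α,β) := (1/2)(I + r m(α,β)·σ), and set L_α := r (∂_α m)·σ and L_β := r (∂_β m)·σ. Then: (i) ∂_α ρ = (ρ L_α + L_α ρ)/2 and ∂_β ρ = (ρ L_β + L_β ρ)/2, i.e. L_α and L_β are symmetric logarithmic derivatives of the family; (ii) the quantum Fisher information matrix F with entries F_{ij} := (1/2) Tr[ρ (L_i L_j + L_j L_i)] (i,j ∈ {α,β}) equals diag(r², r² cos²α); (iii) the matrix A with entries A_{ij} := (1/(2i)) Tr[ρ (L_i L_j − L_j L_i)] equals [[0, −r³ cos α], [r³ cos α, 0]]. (Explicit SLDs, QFI and mean-commutator matrix for the depolarized-qubit two-phase model of the paper, with Bloch radius r = |λ|√(2 Tr ρ² − 1).) -/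
open Matrix

/-- Pauli matrix σ₁. -/
noncomputable def pauli1 : Matrix (Fin 2) (Fin 2) ℂ := !![0, 1; 1, 0]

/-- Pauli matrix σ₂. -/
noncomputable def pauli2 : Matrix (Fin 2) (Fin 2) ℂ := !![0, -Complex.I; Complex.I, 0]

/-- Pauli matrix σ₃. -/
noncomputable def pauli3 : Matrix (Fin 2) (Fin 2) ℂ := !![1, 0; 0, -1]

/-- `v ⬝ σ` for a real vector `v ∈ ℝ³`. -/
noncomputable def dotSigma (v : Fin 3 → ℝ) : Matrix (Fin 2) (Fin 2) ℂ :=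
  (v 0 : ℂ) • pauli1 + (v 1 : ℂ) • pauli2 + (v 2 : ℂ) • pauli3

/-- Unit Bloch vector `m(α,β) = (cos α cos β, cos α sin β, sin α)`. -/
noncomputable def blochDir (α β : ℝ) : Fin 3 → ℝ :=
  ![Real.cos α * Real.cos β, Real.cos α * Real.sin β, Real.sin α]

/-- `∂_α m(α,β)`. -/
noncomputable def dAlphaBlochDir (α β : ℝ) : Fin 3 → ℝ :=
  ![-(Real.sin α * Real.cos β), -(Real.sin α * Real.sin β), Real.cos α]

/-- `∂_β m(α,β)`. -/
noncomputable def dBetaBlochDir (α β : ℝ) : Fin 3 → ℝ :=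
  ![-(Real.cos α * Real.sin β), Real.cos α * Real.cos β, 0]

/-- The qubit state family `ρ(α,β) = (1/2)(I + r m(α,β)·σ)`. -/
noncomputable def qubitRho (r α β : ℝ) : Matrix (Fin 2) (Fin 2) ℂ :=
  (2 : ℂ)⁻¹ • (1 + dotSigma (r • blochDir α β))

/-- The pair of SLD candidates `L_α = r (∂_α m)·σ` and `L_β = r (∂_β m)·σ`. -/
noncomputable def qubitSLD (r α β : ℝ) : Fin 2 → Matrix (Fin 2) (Fin 2) ℂ :=
  ![dotSigma (r • dAlphaBlochDir α β), dotSigma (r • dBetaBlochDir α β)]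

theorem dotSigma_eq_of (v : Fin 3 → ℝ) :
    dotSigma v = !![(v 2 : ℂ), v 0 - v 1 * Complex.I; v 0 + v 1 * Complex.I, -(v 2 : ℂ)] := by
  ext i j
  fin_cases i <;> fin_cases j <;> simp [dotSigma, pauli1, pauli2, pauli3, sub_eq_add_neg]

theorem trace_dotSigma (v : Fin 3 → ℝ) : (dotSigma v).trace = 0 := by
  simp [dotSigma_eq_of, trace_fin_two]

theorem dotSigma_smul (c : ℝ) (v : Fin 3 → ℝ) : dotSigma (c • v) = (c : ℂ) • dotSigma v := by
  simp only [dotSigma, Pi.smul_apply, smul_eq_mul, Complex.ofReal_mul]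
  module

theorem dotSigma_mul_dotSigma (u v : Fin 3 → ℝ) :
    dotSigma u * dotSigma v =
      ((u ⬝ᵥ v : ℝ) : ℂ) • 1 + Complex.I • dotSigma (crossProduct u v) := by
  simp only [dotSigma_eq_of, cross_apply, dotProduct, Fin.sum_univ_three]
  ext i j
  fin_cases i <;> fin_cases j <;> simp <;> ring_nf <;> simp <;> ring

theorem dotSigma_anticommutator (u v : Fin 3 → ℝ) :
    dotSigma u * dotSigma v + dotSigma v * dotSigma u =
      (2 * ((u ⬝ᵥ v : ℝ) : ℂ)) • (1 : Matrix (Fin 2) (Fin 2) ℂ) := by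
  rw [dotSigma_mul_dotSigma, dotSigma_mul_dotSigma, dotProduct_comm v u, ← cross_anticomm u v,
    ← neg_one_smul ℝ, dotSigma_smul]
  push_cast
  module

theorem dotSigma_commutator (u v : Fin 3 → ℝ) :
    dotSigma u * dotSigma v - dotSigma v * dotSigma u =
      (2 * Complex.I) • dotSigma (crossProduct u v) := by
  rw [dotSigma_mul_dotSigma, dotSigma_mul_dotSigma, dotProduct_comm v u, ← cross_anticomm u v,
    ← neg_one_smul ℝ, dotSigma_smul]
  push_cast
  module

theorem trace_qubitRho (r α β : ℝ) : (qubitRho r α β).trace = 1 := by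
  simp [qubitRho, trace_dotSigma]

theorem trace_qubitRho_mul_dotSigma (r α β : ℝ) (v : Fin 3 → ℝ) :
    (qubitRho r α β * dotSigma v).trace = ((r * (blochDir α β ⬝ᵥ v) : ℝ) : ℂ) := by
  simp [qubitRho, add_mul, dotSigma_mul_dotSigma, trace_dotSigma]
  ring

theorem half_trace_qubitRho_mul_anticommutator (r α β : ℝ) (u v : Fin 3 → ℝ) :
    (2 : ℂ)⁻¹ * (qubitRho r α β *
      (dotSigma u * dotSigma v + dotSigma v * dotSigma u)).trace = ((u ⬝ᵥ v : ℝ) : ℂ) := by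
  simp [dotSigma_anticommutator, trace_qubitRho]

theorem half_trace_qubitRho_mul_commutator (r α β : ℝ) (u v : Fin 3 → ℝ) :
    (2 * Complex.I)⁻¹ * (qubitRho r α β *
      (dotSigma u * dotSigma v - dotSigma v * dotSigma u)).trace =
      ((r * (blochDir α β ⬝ᵥ crossProduct u v) : ℝ) : ℂ) := by
  rw [dotSigma_commutator, mul_smul_comm, trace_smul, trace_qubitRho_mul_dotSigma, smul_eq_mul,
    inv_mul_cancel_left₀ (by simp)]

/-- For a Bloch vector perpendicular to `v`, the anticommutator of the state with `v ⬝ σ` only sees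
the identity component. -/
theorem qubitRho_anticommutator_of_orthogonal (r α β : ℝ) {v : Fin 3 → ℝ}
    (h : blochDir α β ⬝ᵥ v = 0) :
    qubitRho r α β * dotSigma v + dotSigma v * qubitRho r α β = dotSigma v := by
  have key := dotSigma_anticommutator (r • blochDir α β) v
  rw [smul_dotProduct, h, smul_zero, Complex.ofReal_zero, mul_zero, zero_smul] at key
  calc _ = dotSigma v + (2 : ℂ)⁻¹ • (dotSigma (r • blochDir α β) * dotSigma v +
        dotSigma v * dotSigma (r • blochDir α β)) := by
        simp only [qubitRho, smul_mul_assoc, mul_smul_comm, add_mul, mul_add, one_mul, mul_one]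
        module
    _ = dotSigma v := by rw [key, smul_zero, add_zero]

theorem hasDerivAt_dotSigma {v : ℝ → Fin 3 → ℝ} {v' : Fin 3 → ℝ} {t : ℝ}
    (h : HasDerivAt v v' t) (i j : Fin 2) :
    HasDerivAt (fun s => dotSigma (v s) i j) (dotSigma v' i j) t := by
  have hk (k : Fin 3) := (hasDerivAt_pi.1 h k).ofReal_comp
  simp only [dotSigma, Matrix.add_apply, Matrix.smul_apply, smul_eq_mul]
  exact (((hk 0).mul_const _).add ((hk 1).mul_const _)).add ((hk 2).mul_const _)

theorem hasDerivAt_blochDir_left (α β : ℝ) :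
    HasDerivAt (fun a => blochDir a β) (dAlphaBlochDir α β) α := by
  refine hasDerivAt_pi.2 fun k => ?_
  fin_cases k
  · simpa [blochDir, dAlphaBlochDir] using (Real.hasDerivAt_cos α).mul_const (Real.cos β)
  · simpa [blochDir, dAlphaBlochDir] using (Real.hasDerivAt_cos α).mul_const (Real.sin β)
  · simpa [blochDir, dAlphaBlochDir] using Real.hasDerivAt_sin α

theorem hasDerivAt_blochDir_right (α β : ℝ) :
    HasDerivAt (fun b => blochDir α b) (dBetaBlochDir α β) β := by
  refine hasDerivAt_pi.2 fun k => ?_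
  fin_cases k
  · simpa [blochDir, dBetaBlochDir] using (Real.hasDerivAt_cos β).const_mul (Real.cos α)
  · simpa [blochDir, dBetaBlochDir] using (Real.hasDerivAt_sin β).const_mul (Real.cos α)
  · simpa [blochDir, dBetaBlochDir] using hasDerivAt_const β (Real.sin α)

theorem hasDerivAt_half_one_add_dotSigma (r : ℝ) {v : ℝ → Fin 3 → ℝ} {v' : Fin 3 → ℝ} {t : ℝ}
    (h : HasDerivAt v v' t) (i j : Fin 2) :
    HasDerivAt (fun s => ((2 : ℂ)⁻¹ • (1 + dotSigma (r • v s))) i j)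
      (((2 : ℂ)⁻¹ • dotSigma (r • v')) i j) t := by
  simp only [Matrix.smul_apply, Matrix.add_apply, smul_eq_mul]
  exact ((hasDerivAt_dotSigma (h.const_smul r) i j).const_add _).const_mul _

theorem blochDir_dotProduct_dAlphaBlochDir (α β : ℝ) :
    blochDir α β ⬝ᵥ dAlphaBlochDir α β = 0 := by
  simp only [blochDir, dAlphaBlochDir, vec3_dotProduct, cons_val]
  linear_combination -(Real.cos α * Real.sin α) * Real.sin_sq_add_cos_sq β

theorem blochDir_dotProduct_dBetaBlochDir (α β : ℝ) :
    blochDir α β ⬝ᵥ dBetaBlochDir α β = 0 := by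
  simp only [blochDir, dBetaBlochDir, vec3_dotProduct, cons_val]
  ring

theorem dAlphaBlochDir_dotProduct_self (α β : ℝ) :
    dAlphaBlochDir α β ⬝ᵥ dAlphaBlochDir α β = 1 := by
  simp only [dAlphaBlochDir, vec3_dotProduct, cons_val]
  linear_combination Real.sin α ^ 2 * Real.sin_sq_add_cos_sq β + Real.sin_sq_add_cos_sq α

theorem dBetaBlochDir_dotProduct_self (α β : ℝ) :
    dBetaBlochDir α β ⬝ᵥ dBetaBlochDir α β = Real.cos α ^ 2 := by
  simp only [dBetaBlochDir, vec3_dotProduct, cons_val]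
  linear_combination Real.cos α ^ 2 * Real.sin_sq_add_cos_sq β

theorem dAlphaBlochDir_dotProduct_dBetaBlochDir (α β : ℝ) :
    dAlphaBlochDir α β ⬝ᵥ dBetaBlochDir α β = 0 := by
  simp only [dAlphaBlochDir, dBetaBlochDir, vec3_dotProduct, cons_val]
  ring

theorem blochDir_dotProduct_cross (α β : ℝ) :
    blochDir α β ⬝ᵥ crossProduct (dAlphaBlochDir α β) (dBetaBlochDir α β) = -Real.cos α := by
  simp only [blochDir, dAlphaBlochDir, dBetaBlochDir, cross_apply, vec3_dotProduct, cons_val]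
  linear_combination
    (-Real.cos α ^ 3 - Real.sin α ^ 2 * Real.cos α) * Real.sin_sq_add_cos_sq β -
      Real.cos α * Real.sin_sq_add_cos_sq α

theorem qubit_two_phase_model_SLD_QFI_meanCommutator
    (r α β : ℝ) (hr0 : 0 < r) (hr1 : r ≤ 1) :
    -- (i) L_α is an SLD: ∂_α ρ = (ρ L_α + L_α ρ)/2, entrywise in α
    (∀ i j : Fin 2, HasDerivAt (fun a => qubitRho r a β i j)
      (((2 : ℂ)⁻¹ • (qubitRho r α β * qubitSLD r α β 0 +
          qubitSLD r α β 0 * qubitRho r α β)) i j) α) ∧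
    -- (i) L_β is an SLD: ∂_β ρ = (ρ L_β + L_β ρ)/2, entrywise in β
    (∀ i j : Fin 2, HasDerivAt (fun b => qubitRho r α b i j)
      (((2 : ℂ)⁻¹ • (qubitRho r α β * qubitSLD r α β 1 +
          qubitSLD r α β 1 * qubitRho r α β)) i j) β) ∧
    -- (ii) the QFI matrix equals diag(r², r² cos²α)
    (∀ i j : Fin 2, (2 : ℂ)⁻¹ *
        (qubitRho r α β * (qubitSLD r α β i * qubitSLD r α β j +
          qubitSLD r α β j * qubitSLD r α β i)).trace =
      !![((r ^ 2 : ℝ) : ℂ), 0; 0, ((r ^ 2 * Real.cos α ^ 2 : ℝ) : ℂ)] i j) ∧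
    -- (iii) the mean-commutator matrix equals [[0, −r³ cos α], [r³ cos α, 0]]
    (∀ i j : Fin 2, (2 * Complex.I)⁻¹ *
        (qubitRho r α β * (qubitSLD r α β i * qubitSLD r α β j -
          qubitSLD r α β j * qubitSLD r α β i)).trace =
      !![0, -((r ^ 3 * Real.cos α : ℝ) : ℂ); ((r ^ 3 * Real.cos α : ℝ) : ℂ), 0] i j) := by
  have hα := blochDir_dotProduct_dAlphaBlochDir α β
  have hβ := blochDir_dotProduct_dBetaBlochDir α β
  have h0 : qubitSLD r α β 0 = dotSigma (r • dAlphaBlochDir α β) := rfl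
  have h1 : qubitSLD r α β 1 = dotSigma (r • dBetaBlochDir α β) := rfl
  refine ⟨fun i j => ?_, fun i j => ?_, fun i j => ?_, fun i j => ?_⟩
  · rw [h0, qubitRho_anticommutator_of_orthogonal r α β (by rw [dotProduct_smul, hα, smul_zero])]
    exact hasDerivAt_half_one_add_dotSigma r (hasDerivAt_blochDir_left α β) i j
  · rw [h1, qubitRho_anticommutator_of_orthogonal r α β (by rw [dotProduct_smul, hβ, smul_zero])]
    exact hasDerivAt_half_one_add_dotSigma r (hasDerivAt_blochDir_right α β) i j
  · have hdot := dAlphaBlochDir_dotProduct_dBetaBlochDir α β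
    have hdot' := (dotProduct_comm _ _).trans hdot
    fin_cases i <;> fin_cases j <;>
      simp only [Fin.zero_eta, Fin.mk_one, h0, h1, half_trace_qubitRho_mul_anticommutator,
        smul_dotProduct, dotProduct_smul, dAlphaBlochDir_dotProduct_self,
        dBetaBlochDir_dotProduct_self, hdot, hdot'] <;>
      simp <;> ring
  · have hcross := blochDir_dotProduct_cross α β
    have hcross' : blochDir α β ⬝ᵥ crossProduct (dBetaBlochDir α β) (dAlphaBlochDir α β) =
        Real.cos α := by
      rw [← cross_anticomm, dotProduct_neg, hcross, neg_neg]
    fin_cases i <;> fin_cases j <;>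
      simp only [Fin.zero_eta, Fin.mk_one, h0, h1, half_trace_qubitRho_mul_commutator,
        map_smul, LinearMap.smul_apply, dotProduct_smul, cross_self, hcross, hcross'] <;>
      simp <;> ring
end

section
/- Let D ≥ 2, let P and P′ be D×D complex Hermitian matrices with P² = P and P′ = PP′ + P′P, and let λ be a real number with 2 + λ(D−2) ≠ 0. Set ρ := λP + (1−λ)·I/D and c := λD/(2 + λ(D−2)). Then the Hermitian matrix L := 2c P′ satisfies ρL + Lρ = 2λP′. (Hence for the locally depolarized pure-state family ρ_θ = λ|ψ_θ⟩⟨ψ_θ| + (1−λ)I/D, whose derivative is λP′ with P′ = ∂(|ψ_θ⟩⟨ψ_θ|), the symmetric logarithmic derivative is L(θ,λ) = [λD/(2+λ(D−2))]·L(θ), where L(θ) = 2P′ is the SLD of the noiseless pure state.) -/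
open Matrix

/-- Depolarized state `ρ = λ P + (1−λ) I/D`. -/
noncomputable def depolState (D : ℕ) (lam : ℝ) (P : Matrix (Fin D) (Fin D) ℂ) :
    Matrix (Fin D) (Fin D) ℂ :=
  (lam : ℂ) • P + (((1 - lam) / (D : ℝ) : ℝ) : ℂ) • (1 : Matrix (Fin D) (Fin D) ℂ)

theorem sld_of_depolarized_pure_state (D : ℕ) (hD : 2 ≤ D)
    (P P' : Matrix (Fin D) (Fin D) ℂ)
    (hP : P.IsHermitian) (hP' : P'.IsHermitian)
    (hproj : P * P = P) (hder : P' = P * P' + P' * P)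
    (lam : ℝ) (hs : 2 + lam * ((D : ℝ) - 2) ≠ 0) :
    depolState D lam P * (((2 * (lam * D / (2 + lam * ((D : ℝ) - 2))) : ℝ) : ℂ) • P') +
      (((2 * (lam * D / (2 + lam * ((D : ℝ) - 2))) : ℝ) : ℂ) • P') * depolState D lam P =
    ((2 * lam : ℝ) : ℂ) • P' := by
  have hD0 : (D : ℝ) ≠ 0 := by positivity
  have hscalar : 2 * (lam * D / (2 + lam * ((D : ℝ) - 2))) * (lam + 2 * ((1 - lam) / D)) =
      2 * lam := by
    field_simp
    ring
  set k : ℝ := 2 * (lam * D / (2 + lam * ((D : ℝ) - 2)))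
  calc depolState D lam P * ((k : ℂ) • P') + ((k : ℂ) • P') * depolState D lam P
      = ((k * lam : ℝ) : ℂ) • (P * P' + P' * P) +
          ((k * (2 * ((1 - lam) / D)) : ℝ) : ℂ) • P' := by
        simp only [depolState, add_mul, mul_add, smul_mul_assoc, mul_smul_comm, one_mul, mul_one]
        push_cast
        module
    _ = ((2 * lam : ℝ) : ℂ) • P' := by
        rw [← hder, ← add_smul, ← hscalar]
        push_cast
        module
end

section
/- Let D ≥ 2, let P be a D×D complex Hermitian matrix with P² = P, let L₁, L₂ be D×D complex Hermitian matrices satisfying L₁ = PL₁ + L₁P and L₂ = PL₂ + L₂P, and let λ be real with s := 2 + λ(D−2) ≠ 0. Set ρ := λP + (1−λ)·I/D and c := λD/s. Then (1/2)·Tr[ρ (cL₁·cL₂ + cL₂·cL₁)] = (λ²D/s) · (1/2)·Tr[P(L₁L₂ + L₂L₁)]. (Scaling of the quantum Fisher information matrix under depolarization: F(θ,λ) = [λ²D/(2+λ(D−2))] · F(θ).) -/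
open Matrix

/-- If `A = P A + A P`, then the trace of the anticommutator of `A` with any `B` is twice its
trace against `P`. -/
theorem trace_anticommutator_eq_two_mul {n R : Type*} [Fintype n] [CommRing R]
    {P A : Matrix n n R} (hA : A = P * A + A * P) (B : Matrix n n R) :
    (A * B + B * A).trace = 2 * (P * (A * B + B * A)).trace := by
  have hAB : (A * B).trace = (P * (A * B)).trace + (P * (B * A)).trace := by
    conv_lhs => rw [hA]
    rw [add_mul, trace_add, mul_assoc, mul_assoc, trace_mul_comm A, mul_assoc]
  rw [mul_add, trace_add, trace_add, trace_mul_comm B A, hAB]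
  ring

theorem qfi_scaling_under_depolarization (D : ℕ) (hD : 2 ≤ D)
    (P L₁ L₂ : Matrix (Fin D) (Fin D) ℂ)
    (hP : P.IsHermitian) (hproj : P * P = P)
    (hL₁ : L₁.IsHermitian) (hL₂ : L₂.IsHermitian)
    (hL₁P : L₁ = P * L₁ + L₁ * P) (hL₂P : L₂ = P * L₂ + L₂ * P)
    (lam : ℝ) (hs : 2 + lam * ((D : ℝ) - 2) ≠ 0) :
    (2 : ℂ)⁻¹ * (depolState D lam P *
        (((lam * D / (2 + lam * ((D : ℝ) - 2)) : ℝ) : ℂ) • L₁ *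
            ((((lam * D / (2 + lam * ((D : ℝ) - 2))) : ℝ) : ℂ) • L₂) +
          (((lam * D / (2 + lam * ((D : ℝ) - 2)) : ℝ) : ℂ) • L₂ *
            ((((lam * D / (2 + lam * ((D : ℝ) - 2))) : ℝ) : ℂ) • L₁)))).trace =
    ((lam ^ 2 * (D : ℝ) / (2 + lam * ((D : ℝ) - 2)) : ℝ) : ℂ) *
      ((2 : ℂ)⁻¹ * (P * (L₁ * L₂ + L₂ * L₁)).trace) := by
  have htr := trace_anticommutator_eq_two_mul hL₁P
  have hD0 : (D : ℂ) ≠ 0 := by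
    have : D ≠ 0 := by omega
    exact_mod_cast this
  have hs' : (2 : ℂ) + lam * ((D : ℂ) - 2) ≠ 0 := by exact_mod_cast hs
  simp only [depolState, smul_mul_assoc, mul_smul_comm, smul_smul, ← smul_add, add_mul, one_mul,
    trace_smul, trace_add, smul_eq_mul]
  simp only [trace_add] at htr
  rw [htr L₂]
  push_cast
  field_simp
  ring
end

section
/- Let D ≥ 1, let ψ := (1/√D) Σ_{i=1}^D e_i ⊗ e_i ∈ ℂ^D ⊗ ℂ^D be the maximally entangled state (e_i the standard basis), and let H, K be D×D traceless Hermitian complex matrices. Define φ_H := (I ⊗ H)ψ and φ_K := (I ⊗ K)ψ. Then the complex number ⟨φ_H, φ_K⟩ − ⟨φ_H, ψ⟩⟨ψ, φ_K⟩ is real and equals (1/(2D))·Tr(HK + KH). (Hence for the ancilla-assisted encoding ψ_θ = (I ⊗ U_θ)ψ the mean-commutator matrix vanishes identically, A_{lm}(θ) = 0, and the quantum Fisher information matrix is F_{lm}(θ) = 2 Tr({H_l, H_m})/D: a maximally entangled probe with ancilla yields a fully compatible model, ℐ(θ) = 0 for all θ.) -/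
open Matrix
open scoped Kronecker

/-- The maximally entangled state `ψ = (1/√D) Σᵢ eᵢ ⊗ eᵢ` of `ℂ^D ⊗ ℂ^D`,
as a vector indexed by `Fin D × Fin D`. -/
noncomputable def maxEnt (D : ℕ) : Fin D × Fin D → ℂ :=
  fun p => if p.1 = p.2 then (((Real.sqrt D)⁻¹ : ℝ) : ℂ) else 0

/-- `φ_H = (I ⊗ H) ψ` for the maximally entangled state `ψ`. -/
noncomputable def ancillaTangent (D : ℕ) (H : Matrix (Fin D) (Fin D) ℂ) :
    Fin D × Fin D → ℂ :=
  ((1 : Matrix (Fin D) (Fin D) ℂ) ⊗ₖ H).mulVec (maxEnt D)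

theorem ancillaTangent_apply (D : ℕ) (H : Matrix (Fin D) (Fin D) ℂ) (p : Fin D × Fin D) :
    ancillaTangent D H p = H p.2 p.1 * (((Real.sqrt D)⁻¹ : ℝ) : ℂ) := by
  simp [ancillaTangent, maxEnt, Matrix.mulVec, dotProduct, Fintype.sum_prod_type,
    Matrix.one_apply]

theorem ancillaTangent_one (D : ℕ) : ancillaTangent D 1 = maxEnt D := by
  simp [ancillaTangent]

theorem inv_sqrt_mul_inv_sqrt (D : ℕ) :
    (((Real.sqrt D)⁻¹ : ℝ) : ℂ) * (((Real.sqrt D)⁻¹ : ℝ) : ℂ) = (D : ℂ)⁻¹ := by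
  rw [← Complex.ofReal_mul, ← mul_inv, Real.mul_self_sqrt (Nat.cast_nonneg D)]
  simp

/-- Overlaps of tangent vectors at the maximally entangled state are normalized
Hilbert–Schmidt inner products. -/
theorem star_ancillaTangent_dotProduct (D : ℕ) (H K : Matrix (Fin D) (Fin D) ℂ) :
    star (ancillaTangent D H) ⬝ᵥ ancillaTangent D K = (D : ℂ)⁻¹ * (Hᴴ * K).trace := by
  simp only [dotProduct, Pi.star_apply, ancillaTangent_apply, Fintype.sum_prod_type,
    Matrix.trace, Matrix.diag_apply, Matrix.mul_apply, Matrix.conjTranspose_apply,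
    Finset.mul_sum, ← inv_sqrt_mul_inv_sqrt]
  refine Finset.sum_congr rfl fun i _ => Finset.sum_congr rfl fun j _ => ?_
  rw [star_mul', Complex.star_def, Complex.conj_ofReal]
  ring

/-- The trace of a product of two Hermitian matrices is real. -/
theorem Matrix.IsHermitian.trace_mul_im {n : Type*} [Fintype n] {H K : Matrix n n ℂ}
    (hH : H.IsHermitian) (hK : K.IsHermitian) : (H * K).trace.im = 0 := by
  rw [← Complex.conj_eq_iff_im, ← Complex.star_def, ← Matrix.trace_conjTranspose,
    Matrix.conjTranspose_mul, hH.eq, hK.eq, Matrix.trace_mul_comm]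

theorem maximally_entangled_ancilla_compatibility (D : ℕ) (hD : 1 ≤ D)
    (H K : Matrix (Fin D) (Fin D) ℂ)
    (hH : H.IsHermitian) (hK : K.IsHermitian)
    (hH0 : H.trace = 0) (hK0 : K.trace = 0) :
    (star (ancillaTangent D H) ⬝ᵥ ancillaTangent D K -
        (star (ancillaTangent D H) ⬝ᵥ maxEnt D) * (star (maxEnt D) ⬝ᵥ ancillaTangent D K)).im
      = 0 ∧
    star (ancillaTangent D H) ⬝ᵥ ancillaTangent D K -
        (star (ancillaTangent D H) ⬝ᵥ maxEnt D) * (star (maxEnt D) ⬝ᵥ ancillaTangent D K) =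
      ((2 * (D : ℝ))⁻¹ : ℂ) * (H * K + K * H).trace := by
  have hcov : star (ancillaTangent D H) ⬝ᵥ ancillaTangent D K -
      (star (ancillaTangent D H) ⬝ᵥ maxEnt D) * (star (maxEnt D) ⬝ᵥ ancillaTangent D K) =
        (D : ℂ)⁻¹ * (H * K).trace := by
    simp [← ancillaTangent_one, star_ancillaTangent_dotProduct, hH.eq, hK0]
  rw [hcov]
  constructor
  · have hinv : (D : ℂ)⁻¹ = (((D : ℝ)⁻¹ : ℝ) : ℂ) := by simp
    rw [hinv, Complex.im_ofReal_mul, hH.trace_mul_im hK, mul_zero]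
  · rw [Matrix.trace_add, Matrix.trace_mul_comm K H, Complex.ofReal_natCast, mul_inv]
    ring
end

section
/- Let D ≥ 1, let ψ := (1/√D) Σ_{i=1}^D e_i ⊗ e_i ∈ ℂ^D ⊗ ℂ^D be the maximally entangled state, and let H, K be D×D traceless Hermitian complex matrices. Define φ_H := (H ⊗ I + I ⊗ H)ψ and φ_K := (K ⊗ I + I ⊗ K)ψ. Then the complex number ⟨φ_H, φ_K⟩ − ⟨φ_H, ψ⟩⟨ψ, φ_K⟩ is real. (Hence for the double-encoding ψ_θ = (U_θ ⊗ U_θ)ψ of a maximally entangled probe, the mean-commutator matrix vanishes, A_{lm}(θ) = 0, giving full compatibility ℐ(θ) = 0 for all θ.) -/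
open Matrix
open scoped Kronecker

/-- `φ_H = (H ⊗ I + I ⊗ H) ψ` for the maximally entangled state `ψ`. -/
noncomputable def doubleTangent (D : ℕ) (H : Matrix (Fin D) (Fin D) ℂ) :
    Fin D × Fin D → ℂ :=
  (H ⊗ₖ (1 : Matrix (Fin D) (Fin D) ℂ) + (1 : Matrix (Fin D) (Fin D) ℂ) ⊗ₖ H).mulVec (maxEnt D)

theorem doubleTangent_apply (D : ℕ) (H : Matrix (Fin D) (Fin D) ℂ) (p : Fin D × Fin D) :
    doubleTangent D H p = (((Real.sqrt D)⁻¹ : ℝ) : ℂ) * (H p.1 p.2 + H p.2 p.1) := by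
  obtain ⟨a, b⟩ := p
  simp [doubleTangent, maxEnt, Matrix.mulVec, dotProduct, Fintype.sum_prod_type,
    Matrix.one_apply, add_mul, Finset.sum_add_distrib, mul_add, mul_comm]

theorem star_maxEnt (D : ℕ) : star (maxEnt D) = maxEnt D := by
  ext p
  by_cases h : p.1 = p.2 <;> simp [maxEnt, h]

/-- For Hermitian `H` the entries of `φ_H` are real. -/
theorem Matrix.IsHermitian.star_doubleTangent {D : ℕ} {H : Matrix (Fin D) (Fin D) ℂ}
    (hH : H.IsHermitian) : star (doubleTangent D H) = doubleTangent D H := by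
  ext p
  rw [Pi.star_apply, doubleTangent_apply, star_mul', star_add, hH.apply, hH.apply, add_comm]
  simp

theorem star_dotProduct_of_star_eq {n : Type*} [Fintype n] {v w : n → ℂ}
    (hv : star v = v) (hw : star w = w) : star (v ⬝ᵥ w) = v ⬝ᵥ w := by
  rw [← Matrix.star_dotProduct_star, hv, hw, dotProduct_comm]

theorem maximally_entangled_double_encoding_compatibility (D : ℕ) (hD : 1 ≤ D)
    (H K : Matrix (Fin D) (Fin D) ℂ)
    (hH : H.IsHermitian) (hK : K.IsHermitian)
    (hH0 : H.trace = 0) (hK0 : K.trace = 0) :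
    (star (doubleTangent D H) ⬝ᵥ doubleTangent D K -
        (star (doubleTangent D H) ⬝ᵥ maxEnt D) * (star (maxEnt D) ⬝ᵥ doubleTangent D K)).im
      = 0 := by
  rw [hH.star_doubleTangent, star_maxEnt, ← Complex.conj_eq_iff_im, starRingEnd_apply,
    star_sub, star_mul',
    star_dotProduct_of_star_eq hH.star_doubleTangent hK.star_doubleTangent,
    star_dotProduct_of_star_eq hH.star_doubleTangent (star_maxEnt D),
    star_dotProduct_of_star_eq (star_maxEnt D) hK.star_doubleTangent]
end

section
/- Let D ≥ 2, let C be a D×D complex skew-Hermitian matrix, let S be a nonempty finite index set, and for each j ∈ S let a_j ∈ ℝ, ε_j ∈ {+1, −1}, φ¹_j, φ²_j ∈ ℝ, and let u_j, w_j ∈ ℂ^D be vectors with C u_j = i ε_j a_j u_j, C w_j = −i ε_j a_j w_j, and such that the family {u_j}_{j∈S} is orthonormal and the family {w_j}_{j∈S} is orthonormal. Define ψ₁ := (1/√|S|) Σ_{j∈S} e^{iφ¹_j} u_j and ψ₂ := (1/√|S|) Σ_{j∈S} e^{iφ²_j} w_j. Then ⟨ψ₁, Cψ₁⟩ + ⟨ψ₂,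 Cψ₂⟩ = 0. (Generalized anti-parallel spin strategy: taking C = [H₁^eff(θ), H₂^eff(θ)], the separable probe ψ₁ ⊗ ψ₂ satisfies the compatibility condition ⟨ψ₁|[H₁,H₂]|ψ₁⟩ + ⟨ψ₂|[H₁,H₂]|ψ₂⟩ = 0, hence A(θ) = 0 and the two-parameter model is fully compatible.) -/
open Matrix
open scoped BigOperators

/-- The quadratic form of a matrix on a linear combination of orthonormal eigenvectors. -/
theorem star_smul_sum_dotProduct_mulVec {n ι : Type*} [Fintype n] [Fintype ι] [DecidableEq ι]
    (C : Matrix n n ℂ) (v : ι → n → ℂ) (l c : ι → ℂ) (r : ℂ)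
    (hv : ∀ j, C *ᵥ v j = l j • v j)
    (hON : ∀ j k, star (v j) ⬝ᵥ v k = if j = k then 1 else 0) :
    star (r • ∑ j, c j • v j) ⬝ᵥ C *ᵥ (r • ∑ j, c j • v j) =
      star r * r * ∑ j, star (c j) * c j * l j := by
  have hC : C *ᵥ (∑ j, c j • v j) = ∑ j, (c j * l j) • v j := by
    simp only [mulVec_sum, mulVec_smul, hv, smul_smul]
  rw [mulVec_smul, hC, star_smul, smul_dotProduct, dotProduct_smul, star_sum, sum_dotProduct]
  simp only [star_smul, smul_dotProduct, dotProduct_sum, dotProduct_smul, hON, smul_eq_mul,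
    mul_ite, mul_one, mul_zero, Finset.sum_ite_eq, Finset.mem_univ, if_true, mul_assoc]
  congr! 3
  ring

theorem star_exp_I_mul_mul_self (x : ℝ) :
    star (Complex.exp (Complex.I * x)) * Complex.exp (Complex.I * x) = 1 := by
  simp [← Complex.exp_conj, ← Complex.exp_add]

theorem generalized_antiparallel_spin_compatibility
    (D : ℕ) (hD : 2 ≤ D) (C : Matrix (Fin D) (Fin D) ℂ) (hC : Cᴴ = -C)
    (ι : Type) [Fintype ι] [DecidableEq ι] [Nonempty ι]
    (a : ι → ℝ) (ε : ι → ℝ) (hε : ∀ j, ε j = 1 ∨ ε j = -1)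
    (φ₁ φ₂ : ι → ℝ) (u w : ι → Fin D → ℂ)
    (hu : ∀ j, C.mulVec (u j) = (Complex.I * (ε j : ℝ) * (a j : ℝ)) • u j)
    (hw : ∀ j, C.mulVec (w j) = (-(Complex.I * (ε j : ℝ) * (a j : ℝ))) • w j)
    (huON : ∀ j k, star (u j) ⬝ᵥ u k = if j = k then 1 else 0)
    (hwON : ∀ j k, star (w j) ⬝ᵥ w k = if j = k then 1 else 0) :
    star ((((Real.sqrt (Fintype.card ι))⁻¹ : ℝ) : ℂ) •
          ∑ j, Complex.exp (Complex.I * (φ₁ j : ℝ)) • u j) ⬝ᵥ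
        C.mulVec ((((Real.sqrt (Fintype.card ι))⁻¹ : ℝ) : ℂ) •
          ∑ j, Complex.exp (Complex.I * (φ₁ j : ℝ)) • u j) +
      star ((((Real.sqrt (Fintype.card ι))⁻¹ : ℝ) : ℂ) •
          ∑ j, Complex.exp (Complex.I * (φ₂ j : ℝ)) • w j) ⬝ᵥ
        C.mulVec ((((Real.sqrt (Fintype.card ι))⁻¹ : ℝ) : ℂ) •
          ∑ j, Complex.exp (Complex.I * (φ₂ j : ℝ)) • w j) = 0 := by
  rw [star_smul_sum_dotProduct_mulVec C u _ _ _ hu huON,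
    star_smul_sum_dotProduct_mulVec C w _ _ _ hw hwON]
  simp only [star_exp_I_mul_mul_self, one_mul, Finset.sum_neg_distrib, mul_neg, add_neg_cancel]
end
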